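/- arXiv:2510.13484 — 5 statements merged into one kernel-verified Lean document; each statement's English description precedes it below -/
import Mathlib

section
/- Let n ≥ 4. Then max{|im(α)| : α ∈ PRD_n^*} = n − ⌊n/3⌋, i.e. the maximum size of the image of an oriented order-decreasing partial transformation on X_n that is neither orientation-preserving nor monotone equals n − ⌊n/3⌋. -/
/-!
Partial transformations on the chain X_n = {1 < 2 < ... < n}, encoded as
functions `ℕ → Option ℕ` (with `none` meaning "undefined"), composed
left-to-right: `x(αβ) = (xα)β`.
-/

namespace OrientedPT

noncomputable section
open scoped Classical

/-- A partial transformation, as a partial map on `ℕ`. -/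
def PTrans : Type := ℕ → Option ℕ

instance : Mul PTrans := ⟨fun f g x => (f x).bind g⟩

theorem mul_apply (f g : PTrans) (x : ℕ) : (f * g) x = (f x).bind g := rfl

instance : Semigroup PTrans where
  mul_assoc f g h := by
    funext x
    show ((f x).bind g).bind h = (f x).bind (fun y => (g y).bind h)
    cases f x <;> rfl

/-- The domain of a partial transformation. -/
def domSet (f : PTrans) : Set ℕ := {x | f x ≠ none}

/-- The image of a partial transformation. -/
def im (f : PTrans) : Set ℕ := {y | ∃ x, f x = some y}

/-- The set of fixed points: `fix(α) = {x ∈ dom α : xα = x}`. -/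
def fixSet (f : PTrans) : Set ℕ := {x | f x = some x}

/-- The value of `f` at `x` (defaulting to `0` off the domain). -/
def val (f : PTrans) (x : ℕ) : ℕ := (f x).getD 0

/-- `f` is a partial transformation on `X_n = {1,…,n}`. -/
def IsPT (n : ℕ) (f : PTrans) : Prop :=
  domSet f ⊆ Set.Icc 1 n ∧ im f ⊆ Set.Icc 1 n

/-- Order-decreasing: `xα ≤ x` for all `x ∈ dom α`. -/
def OrderDecr (f : PTrans) : Prop := ∀ x y, f x = some y → y ≤ x

/-- Order-preserving. -/
def OrderPres (f : PTrans) : Prop :=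
  ∀ x y u v, f x = some u → f y = some v → x ≤ y → u ≤ v

/-- Order-reversing. -/
def OrderRev (f : PTrans) : Prop :=
  ∀ x y u v, f x = some u → f y = some v → x ≤ y → v ≤ u

/-- Monotone: order-preserving or order-reversing. -/
def IsMonotone (f : PTrans) : Prop := OrderPres f ∨ OrderRev f

/-- Injectivity of a partial transformation. -/
def Inj (f : PTrans) : Prop := ∀ x y z, f x = some z → f y = some z → x = y

/-- The cyclic successor of `a` in the set `D`: the least element of `D`
above `a` if there is one, and otherwise the least element of `D`. -/
def cycSucc (D : Set ℕ) (a : ℕ) : ℕ :=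
  if {x ∈ D | a < x}.Nonempty then sInf {x ∈ D | a < x} else sInf D

/-- The cyclic descents of `f`: those `a ∈ dom f` whose cyclic successor in
`dom f` has a strictly smaller value. Writing `dom f = {x₁ < ⋯ < x_t}` these
are exactly the indices `1 ≤ i ≤ t` with `x_{i+1}α < x_iα` (where `x_{t+1} = x₁`). -/
def descents (f : PTrans) : Set ℕ :=
  {a ∈ domSet f | val f (cycSucc (domSet f) a) < val f a}

/-- The cyclic ascents of `f`. -/
def ascents (f : PTrans) : Set ℕ :=
  {a ∈ domSet f | val f a < val f (cycSucc (domSet f) a)}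

/-- Orientation-preserving: at most one cyclic descent. -/
def OrientPres (f : PTrans) : Prop := (descents f).ncard ≤ 1

/-- Orientation-reversing: at most one cyclic ascent. -/
def OrientRev (f : PTrans) : Prop := (ascents f).ncard ≤ 1

/-- Oriented: orientation-preserving or orientation-reversing. -/
def Oriented (f : PTrans) : Prop := OrientPres f ∨ OrientRev f

/-- `PORD n`: all oriented and order-decreasing partial transformations on `X_n`. -/
def PORD (n : ℕ) : Set PTrans := {f | IsPT n f ∧ Oriented f ∧ OrderDecr f}

/-- `PORD(n,r) = {α ∈ PORD_n : |im α| ≤ r}`. -/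
def PORDr (n r : ℕ) : Set PTrans := {f ∈ PORD n | (im f).ncard ≤ r}

/-- `POPD n`: the orientation-preserving elements of `PORD n`. -/
def POPD (n : ℕ) : Set PTrans := {f ∈ PORD n | OrientPres f}

/-- `PORD_n^* = PORD_n \ POPD_n`. -/
def PORDstar (n : ℕ) : Set PTrans := PORD n \ POPD n

/-- `PMD n`: monotone and order-decreasing partial transformations on `X_n`. -/
def PMD (n : ℕ) : Set PTrans := {f | IsPT n f ∧ IsMonotone f ∧ OrderDecr f}

/-- `PRD_n^* = PORD_n^* \ PMD_n`. -/
def PRDstar (n : ℕ) : Set PTrans := PORDstar n \ PMD n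

/-- `IORD n`: the injective elements of `PORD n`. -/
def IORD (n : ℕ) : Set PTrans := {f ∈ PORD n | Inj f}

/-- `IORD(n,r) = {α ∈ IORD_n : |im α| ≤ r}`. -/
def IORDr (n r : ℕ) : Set PTrans := {f ∈ IORD n | (im f).ncard ≤ r}

/-- `A` is a generating set of `S`: `A ⊆ S` and the smallest subsemigroup
containing `A` is `S`. -/
def IsGenSet (S A : Set PTrans) : Prop :=
  A ⊆ S ∧ (Subsemigroup.closure A : Set PTrans) = S

/-- A minimal generating set: a generating set of minimum cardinality. -/
def IsMinGenSet (S A : Set PTrans) : Prop :=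
  IsGenSet S A ∧ ∀ B : Set PTrans, IsGenSet S B → A.ncard ≤ B.ncard

/-- The rank of `S`: the minimum cardinality of a generating set of `S`. -/
def rank (S : Set PTrans) : ℕ :=
  sInf {k | ∃ A : Set PTrans, IsGenSet S A ∧ A.ncard = k}

/-- `z` is undecomposable in `S`: `z = xy` with `x, y ∈ S` forces `z = x` or `z = y`. -/
def Undecomposable (S : Set PTrans) (z : PTrans) : Prop :=
  ∀ x ∈ S, ∀ y ∈ S, z = x * y → z = x ∨ z = y

/-- `T` is a subsemigroup of (the semigroup given by the subset) `S`. -/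
def IsSubsemigroupOf (T S : Set PTrans) : Prop :=
  T ⊆ S ∧ ∀ a ∈ T, ∀ b ∈ T, a * b ∈ T

/-- `T` is a maximal subsemigroup of `S`: a maximal element, under inclusion,
of the family of proper subsemigroups of `S`. -/
def IsMaximalSubsemigroup (S T : Set PTrans) : Prop :=
  IsSubsemigroupOf T S ∧ T ≠ S ∧
    ∀ U : Set PTrans, IsSubsemigroupOf U S → U ≠ S → T ⊆ U → T = U

/-- The restriction of `f` to `Y`. -/
def restrict (f : PTrans) (Y : Set ℕ) : PTrans :=
  fun x => if x ∈ Y then f x else none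

/-- The partial identity `1_Y` on `Y`. -/
def partialId (Y : Set ℕ) : PTrans := fun x => if x ∈ Y then some x else none

/-- `ξ_{p,q}`: domain `[p, q+1]`, fixes every point of `[p,q]`, maps `q+1` to `p`. -/
def xi (p q : ℕ) : PTrans := fun x =>
  if p ≤ x ∧ x ≤ q then some x else if x = q + 1 then some p else none

/-- `γ_{p,q}` (for `1 ≤ p ≤ q−2 ≤ n−2`): with `k = min(p−1, q−p−1)` and
`l = min(q−p−1, n−q)`, it has domain `[p, p+k] ∪ [q, q+l]` and maps
`p+i ↦ p−i` and `q+j ↦ q−j`. -/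
def gamma (n p q : ℕ) : PTrans := fun x =>
  if p ≤ x ∧ x ≤ p + min (p - 1) (q - p - 1) then some (2 * p - x)
  else if q ≤ x ∧ x ≤ q + min (q - p - 1) (n - q) then some (2 * q - x)
  else none

/-- `γ_{p,q}^{r,s}`: with `u = min(r−s, q−p, n−q+1)`, it has domain
`[p, p+s−1] ∪ [q, q+u−1]` and maps `p+i ↦ p−i` and `q+j ↦ q−j`. -/
def gammaRS (n r p q s : ℕ) : PTrans := fun x =>
  if p ≤ x ∧ x + 1 ≤ p + s then some (2 * p - x)
  else if q ≤ x ∧ x + 1 ≤ q + min (r - s) (min (q - p) (n - q + 1)) then some (2 * q - x)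
  else none

/-- `δ^a_Y`: domain `Y ∪ {a}`, fixes every point of `Y`, maps `a` to `a−1`. -/
def deltaMap (a : ℕ) (Y : Set ℕ) : PTrans :=
  fun x => if x ∈ Y then some x else if x = a then some (a - 1) else none

/-- `ζ_Z`: with `a = max Z` and `b = min Z`, domain `Z ∪ {a+1}`, fixes every
point of `Z`, maps `a+1` to `b−1`. -/
def zetaMap (Z : Set ℕ) : PTrans :=
  fun x => if x ∈ Z then some x else if x = sSup Z + 1 then some (sInf Z - 1) else none

/-- `E_r`: the idempotents of `PORD_n` with image of size exactly `r`. -/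
def Eset (n r : ℕ) : Set PTrans := {f ∈ PORD n | f * f = f ∧ (im f).ncard = r}

/-- `F_r = {ξ_{p,q}^r : 1 ≤ p ≤ n−2, p+1 ≤ q ≤ p+r−2 ≤ n−1}`. -/
def Fset (n r : ℕ) : Set PTrans :=
  {f | ∃ p q : ℕ, 1 ≤ p ∧ p + 2 ≤ n ∧ p + 1 ≤ q ∧ q + 2 ≤ p + r ∧ p + r ≤ n + 1 ∧
    f = xi p q}

/-- `G_n = {γ_{p,q} : 1 ≤ p ≤ q−2 ≤ n−2} \ {γ_{1,n}}`. -/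
def Gset (n : ℕ) : Set PTrans :=
  {f | ∃ p q : ℕ, 1 ≤ p ∧ p + 2 ≤ q ∧ q ≤ n ∧ f = gamma n p q} \ {gamma n 1 n}

/-- `H_n^r = {γ_{p,q}^{r,s} : 1 ≤ p ≤ q−2 ≤ n−2, 1 ≤ s ≤ min{p, q−p, r−1}, (q,s) ≠ (n,1)}`. -/
def Hset (n r : ℕ) : Set PTrans :=
  {f | ∃ p q s : ℕ, 1 ≤ p ∧ p + 2 ≤ q ∧ q ≤ n ∧ 1 ≤ s ∧
    s ≤ min p (min (q - p) (r - 1)) ∧ ¬(q = n ∧ s = 1) ∧ f = gammaRS n r p q s}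

/-- `EI_r = {1_Y : Y ⊆ X_n, |Y| = r}`. -/
def EIset (n r : ℕ) : Set PTrans :=
  {f | ∃ Y : Set ℕ, Y ⊆ Set.Icc 1 n ∧ Y.ncard = r ∧ f = partialId Y}

/-- `FI_r = {δ^a_Y : 2 ≤ a ≤ n, Y ⊆ X_n \ {a−1,a}, |Y| = r−1}`. -/
def FIset (n r : ℕ) : Set PTrans :=
  {f | ∃ (a : ℕ) (Y : Set ℕ), 2 ≤ a ∧ a ≤ n ∧ Y ⊆ Set.Icc 1 n \ {a - 1, a} ∧
    Y.ncard = r - 1 ∧ f = deltaMap a Y}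

/-- `GI_k = {ζ_Z : Z ⊆ X_n \ {1,n}, |Z| = k−1}`. -/
def GIset (n k : ℕ) : Set PTrans :=
  {f | ∃ Z : Set ℕ, Z ⊆ Set.Icc 1 n \ {1, n} ∧ Z.ncard = k - 1 ∧ f = zetaMap Z}

/-- `GI_k^c`: those `ζ_Z ∈ GI_k` with `Z` a convex subset (an interval). -/
def GIcset (n k : ℕ) : Set PTrans :=
  {f | ∃ Z : Set ℕ, Z ⊆ Set.Icc 1 n \ {1, n} ∧ Z.ncard = k - 1 ∧ Z.OrdConnected ∧
    f = zetaMap Z}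

/-- `F^r_{p,q} = {α ∈ PORD(n,r) : α restricted to [p, q+1] equals ξ_{p,q}^r}`. -/
def Frestr (n r p q : ℕ) : Set PTrans :=
  {f ∈ PORDr n r | restrict f (Set.Icc p (q + 1)) = xi p q}

/-- `G_{p,q} = {α ∈ PORD^*(n,r) : α restricted to dom(γ_{p,q}) equals γ_{p,q}}`. -/
def Grestr (n r p q : ℕ) : Set PTrans :=
  {f ∈ PORDr n r ∩ PORDstar n | restrict f (domSet (gamma n p q)) = gamma n p q}

/-- `H^{r,s}_{p,q} = {α ∈ PORD^*(n,r) : α restricted to dom(γ^{r,s}_{p,q}) equals γ^{r,s}_{p,q}}`. -/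
def Hrestr (n r p q s : ℕ) : Set PTrans :=
  {f ∈ PORDr n r ∩ PORDstar n |
    restrict f (domSet (gammaRS n r p q s)) = gammaRS n r p q s}

end

end OrientedPT

namespace OrientedPT

theorem mem_domSet_of_eq_some {f : PTrans} {x y : ℕ} (h : f x = some y) : x ∈ domSet f := by
  simp [domSet, h]

theorem val_of_eq_some {f : PTrans} {x y : ℕ} (h : f x = some y) : val f x = y := by
  simp [val, h]

theorem eq_some_val {f : PTrans} {x : ℕ} (h : x ∈ domSet f) : f x = some (val f x) := by
  obtain ⟨y, hy⟩ := Option.ne_none_iff_exists'.mp h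
  rw [val_of_eq_some hy, hy]

/-- If `a` is not the largest element of `D`, its cyclic successor is the least element of `D`
above it. -/
theorem cycSucc_spec {D : Set ℕ} {a b : ℕ} (hb : b ∈ D) (hab : a < b) :
    cycSucc D a ∈ D ∧ a < cycSucc D a ∧ ∀ z ∈ D, a < z → cycSucc D a ≤ z := by
  have hne : {x ∈ D | a < x}.Nonempty := ⟨b, hb, hab⟩
  have hmem := Nat.sInf_mem hne
  rw [cycSucc, if_pos hne]
  exact ⟨hmem.1, hmem.2, fun z hz haz => Nat.sInf_le ⟨hz, haz⟩⟩

theorem cycSucc_of_forall_le {D : Set ℕ} {a : ℕ} (h : ∀ z ∈ D, z ≤ a) :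
    cycSucc D a = sInf D := by
  rw [cycSucc, if_neg]
  rintro ⟨z, hz, haz⟩
  exact absurd (h z hz) (not_le.mpr haz)

/-- A partial transformation without ascents between `x` and `y` does not increase from `x`
to `y`. -/
theorem val_le_val_of_no_ascent {f : PTrans} {x y : ℕ} (hx : x ∈ domSet f) (hy : y ∈ domSet f)
    (hxy : x ≤ y) (h : ∀ a ∈ ascents f, x ≤ a → y ≤ a) : val f y ≤ val f x := by
  induction hk : y - x using Nat.strong_induction_on generalizing x with
  | _ k ih =>
    rcases hxy.eq_or_lt with rfl | hlt
    · exact le_rfl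
    obtain ⟨hsD, hxs, hmin⟩ := cycSucc_spec hy hlt
    have hsy := hmin y hy hlt
    have hstep : val f (cycSucc (domSet f) x) ≤ val f x := by
      by_contra hcon
      exact absurd (h x ⟨hx, not_le.mp hcon⟩ le_rfl) (not_le.mpr hlt)
    exact (ih _ (by omega) hsD hsy (fun a ha hsa => h a ha (by omega)) rfl).trans hstep

/-- An orientation-reversing partial transformation which is not order-reversing splits into two
decreasing blocks, the values on the second dominating those on the first. -/
theorem exists_two_blocks {f : PTrans} (hfin : (domSet f).Finite) (hrev : OrientRev f)
    (hnot : ¬ OrderRev f) :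
    ∃ p ∈ domSet f, ∃ q ∈ domSet f, p < q ∧ (∀ z ∈ domSet f, p ≤ z) ∧
      (∀ z ∈ domSet f, z < q → val f z ≤ val f p) ∧
      (∀ z ∈ domSet f, q ≤ z → val f p ≤ val f z ∧ val f z ≤ val f q) := by
  simp only [OrderRev, not_forall, not_le] at hnot
  obtain ⟨x, y, u, v, hxu, hyv, hxy, huv⟩ := hnot
  have hx := mem_domSet_of_eq_some hxu
  have hy := mem_domSet_of_eq_some hyv
  obtain ⟨a, ha, hxa, hay⟩ : ∃ a ∈ ascents f, x ≤ a ∧ a < y := by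
    by_contra! hcon
    have hle := val_le_val_of_no_ascent hx hy hxy hcon
    rw [val_of_eq_some hxu, val_of_eq_some hyv] at hle
    omega
  have hasc : ∀ b ∈ ascents f, b = a := fun b hb =>
    (Set.ncard_le_one (hfin.subset fun _ h => h.1)).mp hrev b hb a ha
  obtain ⟨hqD, haq, hqmin⟩ := cycSucc_spec hy hay
  have hpD : sInf (domSet f) ∈ domSet f := Nat.sInf_mem ⟨x, hx⟩
  have hpmin : ∀ z ∈ domSet f, sInf (domSet f) ≤ z := fun z hz => Nat.sInf_le hz
  obtain ⟨M, hMD, hM⟩ := hfin.exists_maximalFor id _ ⟨x, hx⟩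
  replace hM : ∀ z ∈ domSet f, z ≤ M := fun z hz => by
    rcases le_total z M with h | h
    · exact h
    · exact hM hz h
  have hpM : val f (sInf (domSet f)) ≤ val f M := by
    by_contra hcon
    have hMa : M = a := hasc M ⟨hMD, by rw [cycSucc_of_forall_le hM]; exact not_le.mp hcon⟩
    have := hM y hy
    omega
  refine ⟨_, hpD, _, hqD, (hpmin a ha.1).trans_lt haq, hpmin, fun z hz hzq => ?_,
    fun z hz hqz => ⟨hpM.trans ?_, ?_⟩⟩
  · refine val_le_val_of_no_ascent hpD hz (hpmin z hz) fun b hb _ => ?_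
    rw [hasc b hb]
    by_contra hcon
    have := hqmin z hz (not_le.mp hcon)
    omega
  · refine val_le_val_of_no_ascent hz hMD (hM z hz) fun b hb hzb => ?_
    have := hasc b hb
    omega
  · refine val_le_val_of_no_ascent hqD hz hqz fun b hb hqb => ?_
    have := hasc b hb
    omega

theorem ncard_im_le_of_orientRev {n : ℕ} {f : PTrans} (hpt : IsPT n f) (hdec : OrderDecr f)
    (hrev : OrientRev f) (hnot : ¬ OrderRev f) : (im f).ncard ≤ n - n / 3 := by
  obtain ⟨p, hp, q, hq, hpq, hpmin, hlow, hhigh⟩ :=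
    exists_two_blocks ((Set.finite_Icc 1 n).subset hpt.1) hrev hnot
  have hmp := hdec _ _ (eq_some_val hp)
  have hqq := hdec _ _ (eq_some_val hq)
  have hqn := (hpt.1 hq).2
  have hcard : ∀ S T : Finset ℕ, im f ⊆ ↑(S ∪ T) → (im f).ncard ≤ S.card + T.card :=
    fun S T h => (Set.ncard_le_ncard h (Finset.finite_toSet _)).trans
      ((Set.ncard_coe_finset _).le.trans (Finset.card_union_le _ _))
  have hwide : (im f).ncard ≤ (q - p) + (q - val f p) := by
    refine (hcard ((Finset.Ico p q).image (val f)) (Finset.Ioc (val f p) q) ?_).trans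
      (add_le_add (Finset.card_image_le.trans (by simp)) (by simp))
    rintro y ⟨x, hxy⟩
    have hx := mem_domSet_of_eq_some hxy
    rw [← val_of_eq_some hxy]
    simp only [Finset.coe_union, Set.mem_union, Finset.mem_coe, Finset.mem_image,
      Finset.mem_Ico, Finset.mem_Ioc]
    by_cases hxq : x < q
    · exact Or.inl ⟨x, ⟨hpmin x hx, hxq⟩, rfl⟩
    · obtain ⟨h₁, h₂⟩ := hhigh x hx (not_lt.mp hxq)
      rcases h₁.eq_or_lt with h | h
      · exact Or.inl ⟨p, ⟨le_rfl, hpq⟩, h⟩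
      · exact Or.inr ⟨h, h₂.trans hqq⟩
  have hshort : (im f).ncard ≤ val f p + (n + 1 - q) := by
    refine (hcard (Finset.Icc 1 (val f p)) ((Finset.Icc q n).image (val f)) ?_).trans
      (add_le_add (by simp) (Finset.card_image_le.trans (by simp)))
    rintro y ⟨x, hxy⟩
    have hx := mem_domSet_of_eq_some hxy
    have hy := (hpt.2 ⟨x, hxy⟩).1
    rw [← val_of_eq_some hxy] at hy ⊢
    simp only [Finset.coe_union, Set.mem_union, Finset.mem_coe, Finset.mem_image,
      Finset.mem_Icc]
    by_cases hxq : x < q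
    · exact Or.inl ⟨hy, hlow x hx hxq⟩
    · exact Or.inr ⟨x, ⟨not_lt.mp hxq, (hpt.1 hx).2⟩, rfl⟩
  omega

/-- The map with domain `[d, n]` reflecting `[d, 2d - 1]` about `d` and `[2d, n]` about `2d`. -/
def doubleReflection (n d : ℕ) : PTrans := fun x =>
  if d ≤ x ∧ x ≤ n then some (if x < 2 * d then 2 * d - x else 4 * d - x) else none

theorem domSet_doubleReflection (n d : ℕ) : domSet (doubleReflection n d) = Set.Icc d n := by
  ext x
  simp [domSet, doubleReflection]

theorem doubleReflection_eq_some {n d x y : ℕ} : doubleReflection n d x = some y ↔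
    (d ≤ x ∧ x ≤ n) ∧ (if x < 2 * d then 2 * d - x else 4 * d - x) = y := by
  simp [doubleReflection]

theorem val_doubleReflection {n d x : ℕ} (h : d ≤ x ∧ x ≤ n) :
    val (doubleReflection n d) x = if x < 2 * d then 2 * d - x else 4 * d - x :=
  val_of_eq_some (doubleReflection_eq_some.mpr ⟨h, rfl⟩)

theorem cycSucc_Icc_of_lt {d n a : ℕ} (hda : d ≤ a) (han : a < n) :
    cycSucc (Set.Icc d n) a = a + 1 := by
  obtain ⟨-, h₂, h₃⟩ := cycSucc_spec (D := Set.Icc d n) ⟨hda.trans han.le, le_rfl⟩ han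
  have := h₃ (a + 1) ⟨by omega, han⟩ (by omega)
  omega

theorem cycSucc_Icc_right {d n : ℕ} (h : d ≤ n) : cycSucc (Set.Icc d n) n = d := by
  rw [cycSucc_of_forall_le fun z hz => hz.2]
  exact (isLeast_Icc h).csInf_eq

theorem doubleReflection_mem_PRDstar {n d : ℕ} (hd : 2 ≤ d) (hdn : 2 * d ≤ n)
    (hnd : n < 3 * d) : doubleReflection n d ∈ PRDstar n := by
  have hpt : IsPT n (doubleReflection n d) := by
    refine ⟨?_, ?_⟩
    · rw [domSet_doubleReflection]
      exact Set.Icc_subset_Icc_left (by omega)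
    · rintro y ⟨x, hx⟩
      obtain ⟨hx, rfl⟩ := doubleReflection_eq_some.mp hx
      constructor <;> split_ifs <;> omega
  have hdec : OrderDecr (doubleReflection n d) := by
    intro x y hxy
    obtain ⟨hx, rfl⟩ := doubleReflection_eq_some.mp hxy
    split_ifs <;> omega
  have hrev : OrientRev (doubleReflection n d) := by
    have hsub : ascents (doubleReflection n d) ⊆ {2 * d - 1} := by
      rintro a ⟨ha, hasc⟩
      rw [domSet_doubleReflection] at ha hasc
      obtain ⟨hda, han⟩ := ha
      rw [Set.mem_singleton_iff]
      rcases han.eq_or_lt with rfl | hlt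
      · rw [cycSucc_Icc_right hda, val_doubleReflection ⟨hda, le_rfl⟩,
          val_doubleReflection ⟨le_rfl, hda⟩] at hasc
        split_ifs at hasc <;> omega
      · rw [cycSucc_Icc_of_lt hda hlt, val_doubleReflection ⟨hda, han⟩,
          val_doubleReflection ⟨by omega, hlt⟩] at hasc
        split_ifs at hasc <;> omega
    exact (Set.ncard_le_ncard hsub).trans (Set.ncard_singleton _).le
  have hpres : ¬ OrientPres (doubleReflection n d) := by
    intro hop
    have hfin : (descents (doubleReflection n d)).Finite :=
      (Set.finite_Icc d n).subset fun x hx => domSet_doubleReflection n d ▸ hx.1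
    have hfirst : d ∈ descents (doubleReflection n d) := by
      refine ⟨by rw [domSet_doubleReflection]; exact ⟨le_rfl, by omega⟩, ?_⟩
      rw [domSet_doubleReflection, cycSucc_Icc_of_lt le_rfl (by omega),
        val_doubleReflection ⟨by omega, by omega⟩, val_doubleReflection ⟨le_rfl, by omega⟩]
      split_ifs <;> omega
    have hlast : n ∈ descents (doubleReflection n d) := by
      refine ⟨by rw [domSet_doubleReflection]; exact ⟨by omega, le_rfl⟩, ?_⟩
      rw [domSet_doubleReflection, cycSucc_Icc_right (by omega),
        val_doubleReflection ⟨le_rfl, by omega⟩, val_doubleReflection ⟨by omega, le_rfl⟩]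
      split_ifs <;> omega
    have := (Set.ncard_le_one hfin).mp hop d hfirst n hlast
    omega
  refine ⟨⟨⟨hpt, Or.inr hrev, hdec⟩, fun h => hpres h.2⟩, ?_⟩
  rintro ⟨-, hmono | hmono, -⟩
  · have := hmono d (d + 1) _ _ (doubleReflection_eq_some.mpr ⟨by omega, rfl⟩)
      (doubleReflection_eq_some.mpr ⟨by omega, rfl⟩) (by omega)
    split_ifs at this <;> omega
  · have := hmono d (2 * d) _ _ (doubleReflection_eq_some.mpr ⟨by omega, rfl⟩)
      (doubleReflection_eq_some.mpr ⟨by omega, rfl⟩) (by omega)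
    split_ifs at this <;> omega

theorem ncard_im_doubleReflection {n d : ℕ} (hnd : n < 3 * d) :
    (im (doubleReflection n d)).ncard = n + 1 - d := by
  have him : im (doubleReflection n d) =
      (fun x => if x < 2 * d then 2 * d - x else 4 * d - x) '' Set.Icc d n := by
    ext y
    simp only [im, Set.mem_ofPred_eq, Set.mem_image, doubleReflection_eq_some, Set.mem_Icc]
  rw [him, Set.InjOn.ncard_image, ← Finset.coe_Icc, Set.ncard_coe_finset, Nat.card_Icc]
  rintro x ⟨hx₁, hx₂⟩ y ⟨hy₁, hy₂⟩ hxy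
  simp only at hxy
  split_ifs at hxy <;> omega

end OrientedPT

open OrientedPT in
/-- For `n ≥ 4`, the maximum of `|im α|` over
`α ∈ PRD_n^*` equals `n − ⌊n/3⌋`. -/
theorem max_image_card_PRDstar (n : ℕ) (hn : 4 ≤ n) :
    IsGreatest {k : ℕ | ∃ f ∈ PRDstar n, (im f).ncard = k} (n - n / 3) := by
  refine ⟨⟨doubleReflection n (n / 3 + 1),
    doubleReflection_mem_PRDstar (by omega) (by omega) (by omega), ?_⟩, ?_⟩
  · rw [ncard_im_doubleReflection (by omega)]
    omega
  · rintro k ⟨f, ⟨⟨⟨hpt, hor, hdec⟩, hpres⟩, hmono⟩, rfl⟩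
    have hrev : OrientRev f := hor.resolve_left fun h => hpres ⟨⟨hpt, hor, hdec⟩, h⟩
    exact ncard_im_le_of_orientRev hpt hdec hrev fun h => hmono ⟨hpt, Or.inr h, hdec⟩
end

section
/- For all order-decreasing partial transformations δ and λ on X_n, fix(δλ) = fix(δ) ∩ fix(λ). -/
open OrientedPT in
/-- For order-decreasing partial transformations `δ, μ` on `X_n`,
`fix(δμ) = fix(δ) ∩ fix(μ)`. -/
theorem fix_mul_of_orderDecr (n : ℕ) (δ μ : PTrans)
    (hδ : IsPT n δ) (hδd : OrderDecr δ) (hμ : IsPT n μ) (hμd : OrderDecr μ) :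
    fixSet (δ * μ) = fixSet δ ∩ fixSet μ := by
  ext x
  simp only [fixSet, Set.mem_inter_iff, Set.mem_ofPred_eq, mul_apply]
  refine Option.bind_eq_some_iff.trans ⟨?_, ?_⟩
  · rintro ⟨y, hxy, hyx⟩
    obtain rfl : y = x := le_antisymm (hδd x y hxy) (hμd y x hyx)
    exact ⟨hxy, hyx⟩
  · rintro ⟨hx, hx'⟩
    exact ⟨x, hx, hx'⟩
end

section
/- Let n ≥ 4. For every α ∈ PORD_n^* (i.e. every oriented order-decreasing partial transformation on X_n that is not orientation-preserving), |fix(α)| ≤ 2. -/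
namespace OrientedPT

theorem mem_domSet_of_mem_fixSet {f : PTrans} {x : ℕ} (h : x ∈ fixSet f) : x ∈ domSet f := by
  have hx : f x = some x := h
  simp [domSet, hx]

theorem val_of_mem_fixSet {f : PTrans} {x : ℕ} (h : x ∈ fixSet f) : val f x = x := by
  have hx : f x = some x := h
  simp [val, hx]

/-- Below a larger element `y` of `D`, the cyclic successor is the ordinary successor in `D`. -/
theorem cycSucc_spec_s2 {D : Set ℕ} {x y : ℕ} (hy : y ∈ D) (hxy : x < y) :
    cycSucc D x ∈ D ∧ x < cycSucc D x ∧ cycSucc D x ≤ y := by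
  have hne : {z ∈ D | x < z}.Nonempty := ⟨y, hy, hxy⟩
  rw [cycSucc, if_pos hne]
  have hmem := Nat.sInf_mem hne
  exact ⟨hmem.1, hmem.2, Nat.sInf_le ⟨hy, hxy⟩⟩

/-- If the value of `f` increases from `x` to `y`, then `f` has an ascent in `[x, y)`. -/
theorem exists_ascent_of_val_lt {f : PTrans} {x y : ℕ} (hx : x ∈ domSet f) (hy : y ∈ domSet f)
    (hxy : x < y) (hval : val f x < val f y) : ∃ a ∈ ascents f, x ≤ a ∧ a < y := by
  induction hk : y - x using Nat.strong_induction_on generalizing x with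
  | _ k ih =>
    obtain ⟨hs, hxs, hsy⟩ := cycSucc_spec_s2 hy hxy
    by_cases hlt : val f x < val f (cycSucc (domSet f) x)
    · exact ⟨x, ⟨hx, hlt⟩, le_rfl, hxy⟩
    · have hsval : val f (cycSucc (domSet f) x) < val f y := by omega
      have hsy' : cycSucc (domSet f) x < y :=
        lt_of_le_of_ne hsy fun h => by rw [h] at hsval; exact lt_irrefl _ hsval
      obtain ⟨a, ha, hsa, hay⟩ := ih (y - cycSucc (domSet f) x) (by omega) hs hsy' hsval rfl
      exact ⟨a, ha, by omega, hay⟩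

/-- An orientation-reversing map with finite domain has no three fixed points. -/
theorem not_orientRev_of_three_fixed {f : PTrans} (hfin : (domSet f).Finite) {a b c : ℕ}
    (ha : a ∈ fixSet f) (hb : b ∈ fixSet f) (hc : c ∈ fixSet f) (hab : a < b) (hbc : b < c) :
    ¬ OrientRev f := by
  intro hrev
  have exists_ascent : ∀ {x y : ℕ}, x ∈ fixSet f → y ∈ fixSet f → x < y →
      ∃ d ∈ ascents f, x ≤ d ∧ d < y := fun hx hy hxy =>
    exists_ascent_of_val_lt (mem_domSet_of_mem_fixSet hx) (mem_domSet_of_mem_fixSet hy) hxy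
      (by rwa [val_of_mem_fixSet hx, val_of_mem_fixSet hy])
  obtain ⟨d, hd, -, hdb⟩ := exists_ascent ha hb hab
  obtain ⟨e, he, hbe, -⟩ := exists_ascent hb hc hbc
  have hasc : (ascents f).Finite := hfin.subset fun _ h => h.1
  have hde : d = e := (Set.ncard_le_one hasc).1 hrev d hd e he
  omega

theorem exists_lt_lt_of_two_lt_ncard {s : Set ℕ} (h : 2 < s.ncard) :
    ∃ a ∈ s, ∃ b ∈ s, ∃ c ∈ s, a < b ∧ b < c := by
  obtain ⟨a, b, c, ha, hb, hc, hab, hac, hbc⟩ :=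
    (Set.two_lt_ncard_iff (Set.finite_of_ncard_pos (by omega))).1 h
  grind

end OrientedPT

open OrientedPT in
/-- For `n ≥ 4`, every `α ∈ PORD_n^*` has at most two fixed points. -/
theorem fix_card_le_two_of_PORDstar (n : ℕ) (hn : 4 ≤ n) :
    ∀ f ∈ PORDstar n, (fixSet f).ncard ≤ 2 := by
  rintro f ⟨hf, hnot⟩
  by_contra! hcard
  obtain ⟨a, ha, b, hb, c, hc, hab, hbc⟩ := exists_lt_lt_of_two_lt_ncard hcard
  have hrev : OrientRev f := hf.2.1.resolve_left fun h => hnot ⟨hf, h⟩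
  exact not_orientRev_of_three_fixed ((Set.finite_Icc 1 n).subset hf.1.1) ha hb hc hab hbc hrev
end

section
/- Let n ≥ 4 and 3 ≤ r ≤ n−1. Every idempotent ε of PORD_n with |im(ε)| = r is undecomposable in PORD(n,r): whenever ε = αβ with α, β ∈ PORD(n,r), then ε = α or ε = β. -/
namespace OrientedPT

/-- If a product of two order-decreasing maps fixes `x`, then so does each factor. -/
theorem fix_factors_of_mul_fix {α β : PTrans} (hα : OrderDecr α) (hβ : OrderDecr β) {x : ℕ}
    (h : (α * β) x = some x) : α x = some x ∧ β x = some x := by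
  obtain ⟨y, hy, hyx⟩ := Option.bind_eq_some_iff.mp ((mul_apply α β x).symm.trans h)
  obtain rfl : y = x := le_antisymm (hα x y hy) (hβ y x hyx)
  exact ⟨hy, hyx⟩

/-- An idempotent fixes every point of its image. -/
theorem apply_of_mem_im_of_idempotent {ε : PTrans} (hid : ε * ε = ε) {y : ℕ} (hy : y ∈ im ε) :
    ε y = some y := by
  obtain ⟨x, hx⟩ := hy
  have h := congrFun hid x
  rwa [mul_apply, hx] at h

/-- If `β` fixes the image of `α` pointwise, then `α * β = α`. -/
theorem mul_eq_left_of_fix_im {α β : PTrans} (h : ∀ y ∈ im α, β y = some y) : α * β = α := by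
  funext x
  rw [mul_apply]
  cases hx : α x with
  | none => rfl
  | some y => exact h y ⟨x, hx⟩

end OrientedPT

open OrientedPT in
/-- For `n ≥ 4` and `3 ≤ r ≤ n−1`, every idempotent of `PORD_n`
with image of size exactly `r` is undecomposable in `PORD(n,r)`. -/
theorem idempotent_undecomposable (n r : ℕ) (hn : 4 ≤ n) (hr1 : 3 ≤ r)
    (hr2 : r ≤ n - 1) (ε : PTrans) (hε : ε ∈ PORD n) (hid : ε * ε = ε)
    (him : (im ε).ncard = r) :
    Undecomposable (PORDr n r) ε := by
  rintro α ⟨⟨⟨-, hαim⟩, -, hα⟩, hαr⟩ β ⟨⟨-, -, hβ⟩, -⟩ rfl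
  have hfix : ∀ y ∈ im (α * β), α y = some y ∧ β y = some y := fun y hy =>
    fix_factors_of_mul_fix hα hβ (apply_of_mem_im_of_idempotent hid hy)
  have him_eq : im (α * β) = im α :=
    Set.eq_of_subset_of_ncard_le (fun y hy => ⟨y, (hfix y hy).1⟩) (hαr.trans him.ge)
      ((Set.finite_Icc 1 n).subset hαim)
  exact Or.inl (mul_eq_left_of_fix_im fun y hy => (hfix y (him_eq ▸ hy)).2)
end

section
/- Let n ≥ 4 and 3 ≤ r ≤ n−1, and let A be a generating set of PORD(n,r). Then for each 1 ≤ p ≤ n−2 and each p+1 ≤ q ≤ p+r−2 ≤ n−1, there exists α ∈ A whose restriction to [p, q+1] equals ξ_{p,q}^r. -/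
namespace OrientedPT

theorem mem_domSet_xi {p q x : ℕ} (hpq : p ≤ q) :
    x ∈ domSet (xi p q) ↔ p ≤ x ∧ x ≤ q + 1 := by
  unfold domSet xi
  simp only [Set.mem_ofPred_eq]
  split_ifs <;> simp <;> omega

theorem im_xi_subset {p q : ℕ} (hpq : p ≤ q) : im (xi p q) ⊆ Set.Icc p q := by
  rintro y ⟨x, hx⟩
  unfold xi at hx
  simp only [Set.mem_Icc]
  split_ifs at hx <;> simp at hx <;> omega

theorem val_xi_of_mem {p q x : ℕ} (hpx : p ≤ x) (hxq : x ≤ q) : val (xi p q) x = x := by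
  simp [val, xi, hpx, hxq]

theorem val_xi_succ (p q : ℕ) : val (xi p q) (q + 1) = p := by
  simp [val, xi]

theorem cycSucc_xi_of_le {p q a : ℕ} (hpq : p ≤ q) (hpa : p ≤ a) (haq : a ≤ q) :
    cycSucc (domSet (xi p q)) a = a + 1 := by
  have hleast : IsLeast {x ∈ domSet (xi p q) | a < x} (a + 1) := by
    refine ⟨⟨(mem_domSet_xi hpq).2 ⟨by omega, by omega⟩, by omega⟩, ?_⟩
    rintro x ⟨-, hx⟩
    exact hx
  rw [cycSucc, if_pos ⟨_, hleast.1⟩, hleast.csInf_eq]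

theorem cycSucc_xi_last {p q : ℕ} (hpq : p ≤ q) :
    cycSucc (domSet (xi p q)) (q + 1) = p := by
  have hempty : ¬ {x ∈ domSet (xi p q) | q + 1 < x}.Nonempty := by
    rintro ⟨x, hx, hlt⟩
    have := (mem_domSet_xi hpq).1 hx
    omega
  have hleast : IsLeast (domSet (xi p q)) p :=
    ⟨(mem_domSet_xi hpq).2 ⟨le_rfl, by omega⟩, fun x hx => ((mem_domSet_xi hpq).1 hx).1⟩
  rw [cycSucc, if_neg hempty, hleast.csInf_eq]

theorem descents_xi_subset {p q : ℕ} (hpq : p ≤ q) : descents (xi p q) ⊆ {q} := by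
  rintro a ⟨ha, hlt⟩
  rw [mem_domSet_xi hpq] at ha
  rw [Set.mem_singleton_iff]
  by_contra hne
  rcases Nat.lt_or_ge a q with haq | haq
  · rw [cycSucc_xi_of_le hpq ha.1 haq.le, val_xi_of_mem ha.1 haq.le,
      val_xi_of_mem (by omega) haq] at hlt
    omega
  · obtain rfl : a = q + 1 := by omega
    rw [cycSucc_xi_last hpq, val_xi_succ, val_xi_of_mem le_rfl hpq] at hlt
    omega

theorem orientPres_xi {p q : ℕ} (hpq : p ≤ q) : OrientPres (xi p q) := by
  have := Set.ncard_le_ncard (descents_xi_subset hpq)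
  rwa [Set.ncard_singleton] at this

theorem orderDecr_xi {p q : ℕ} (hpq : p ≤ q) : OrderDecr (xi p q) := by
  intro x y hxy
  unfold xi at hxy
  split_ifs at hxy <;> simp at hxy <;> omega

theorem xi_mem_PORDr {n r p q : ℕ} (hp : 1 ≤ p) (hpq : p ≤ q) (hqn : q + 1 ≤ n)
    (hqr : q + 1 ≤ p + r) : xi p q ∈ PORDr n r := by
  refine ⟨⟨⟨fun x hx => ?_, fun y hy => ?_⟩, Or.inl (orientPres_xi hpq), orderDecr_xi hpq⟩, ?_⟩
  · rw [mem_domSet_xi hpq] at hx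
    exact ⟨by omega, by omega⟩
  · have := im_xi_subset hpq hy
    rw [Set.mem_Icc] at this ⊢
    omega
  · have := Set.ncard_le_ncard (im_xi_subset hpq)
    rw [Set.ncard_Icc_nat] at this
    omega

/-- A map restricts to `ξ_{p,q}` exactly when it fixes `[p, q]` and sends `q+1` to `p`. -/
theorem restrict_eq_xi_iff {f : PTrans} {p q : ℕ} (hpq : p ≤ q) :
    restrict f (Set.Icc p (q + 1)) = xi p q ↔
      (∀ x, p ≤ x → x ≤ q → f x = some x) ∧ f (q + 1) = some p := by
  constructor
  · intro h
    refine ⟨fun x hpx hxq => ?_, ?_⟩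
    · have hx := congrFun h x
      simpa [restrict, xi, hpx, hxq, Nat.le_succ_of_le hxq] using hx
    · have hx := congrFun h (q + 1)
      simpa [restrict, xi, Nat.le_succ_of_le hpq] using hx
  · rintro ⟨hfix, hlast⟩
    funext x
    simp only [restrict, xi, Set.mem_Icc]
    split_ifs with hdom hmem heq hmem heq
    · exact hfix x hmem.1 hmem.2
    · rw [heq, hlast]
    all_goals first | rfl | omega

/-- If a product of order-decreasing maps restricts to `ξ_{p,q}` on `[p, q+1]`,
then so does one of the factors. -/
theorem restrict_eq_xi_of_mul {f g : PTrans} (hf : OrderDecr f) (hg : OrderDecr g) {p q : ℕ}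
    (hpq : p ≤ q) (h : restrict (f * g) (Set.Icc p (q + 1)) = xi p q) :
    restrict f (Set.Icc p (q + 1)) = xi p q ∨ restrict g (Set.Icc p (q + 1)) = xi p q := by
  rw [restrict_eq_xi_iff hpq] at h
  rw [restrict_eq_xi_iff hpq, restrict_eq_xi_iff hpq]
  obtain ⟨hfix, hlast⟩ := h
  have hfactor : ∀ x, p ≤ x → x ≤ q → f x = some x ∧ g x = some x := by
    intro x hpx hxq
    obtain ⟨y, hfy, hgy⟩ := Option.bind_eq_some_iff.1 (hfix x hpx hxq)
    obtain rfl : y = x := le_antisymm (hf _ _ hfy) (hg _ _ hgy)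
    exact ⟨hfy, hgy⟩
  obtain ⟨y, hfy, hgy⟩ := Option.bind_eq_some_iff.1 hlast
  have hpy : p ≤ y := hg _ _ hgy
  rcases (hf _ _ hfy).lt_or_eq with hlt | rfl
  · left
    have hy := (hfactor y hpy (by omega)).2
    obtain rfl : y = p := Option.some.inj (hy.symm.trans hgy)
    exact ⟨fun x hpx hxq => (hfactor x hpx hxq).1, hfy⟩
  · exact Or.inr ⟨fun x hpx hxq => (hfactor x hpx hxq).2, hgy⟩

end OrientedPT

open OrientedPT in
/-- For `n ≥ 4`, `3 ≤ r ≤ n−1` and any generating set `A` of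
`PORD(n,r)`: for each `1 ≤ p ≤ n−2` and `p+1 ≤ q ≤ p+r−2 ≤ n−1` there is
`α ∈ A` whose restriction to `[p, q+1]` is `ξ_{p,q}^r`. -/
theorem genSet_contains_xi (n r : ℕ) (hn : 4 ≤ n) (hr1 : 3 ≤ r) (hr2 : r ≤ n - 1)
    (A : Set PTrans) (hA : IsGenSet (PORDr n r) A) :
    ∀ p q : ℕ, 1 ≤ p → p + 2 ≤ n → p + 1 ≤ q → q + 2 ≤ p + r → p + r ≤ n + 1 →
      ∃ α ∈ A, restrict α (Set.Icc p (q + 1)) = xi p q := by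
  intro p q hp _ hpq hqr hrn
  have hle : p ≤ q := by omega
  have key : ∀ f ∈ Subsemigroup.closure A, restrict f (Set.Icc p (q + 1)) = xi p q →
      ∃ α ∈ A, restrict α (Set.Icc p (q + 1)) = xi p q := by
    intro f hf
    induction hf using Subsemigroup.closure_induction with
    | mem f hf => exact fun h => ⟨f, hf, h⟩
    | mul f g hf hg ihf ihg =>
      intro h
      have hdecr : ∀ k ∈ Subsemigroup.closure A, OrderDecr k := fun k hk =>
        (hA.2.subset hk).1.2.2
      exact (restrict_eq_xi_of_mul (hdecr f hf) (hdecr g hg) hle h).elim ihf ihg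
  have hxi : xi p q ∈ Subsemigroup.closure A :=
    hA.2.symm.subset (xi_mem_PORDr hp hle (by omega) (by omega))
  refine key _ hxi ((restrict_eq_xi_iff hle).2 ⟨fun x hpx hxq => ?_, ?_⟩) <;>
    simp [xi, *]
end
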